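/- Let c ∈ (0,1), assume k_c > 0 satisfies a(k_c) = c, m'(k_c) ≠ 0, and m(k) ≠ 0 for all real k ∉ {−k_c, k_c}, and let (Ψ_δ)_{δ>0} satisfy Assumption A with constant C_Ψ and I_δ = 0 for all δ > 0. Let κ > 1/2. Then there exists δ_κ > 0 such that the following holds for all 0 < δ < δ_κ: if R₁, R₂ ∈ W^{2,∞}(ℝ) and μ₁, μ₂ ∈ ℝ satisfy, for i = 1, 2, M R_i = A²(Ψ'_δ ∘ R_i) + μ_i, R_i(0) = 0, R_i(x) ≤ −δ for all x ≤ −δ^κ, and R_i(x) ≥ +δ for all x ≥ +δ^κ, then either R₁ = R₂ or there exist constants γ₊ ∈ ℝ and (α₊, β₊) ∈ ℝ² with (α₊, β₊) ≠ (0, 0) such that R₁(x) − R₂(x) − α₊(cos(k_c x) − 1) − β₊ sin(k_c x) − γ₊ → 0 as x → +∞. -/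

import Mathlib

open MeasureTheory Real Filter Topology

/-- The averaging operator `(A F)(x) = ∫_{x-1/2}^{x+1/2} F(s) ds`. -/
noncomputable def Aop (F : ℝ → ℝ) : ℝ → ℝ := fun x => ∫ s in (x - 1/2)..(x + 1/2), F s

/-- The operator `M F = A(A F) - c² F`. -/
noncomputable def Mop (c : ℝ) (F : ℝ → ℝ) : ℝ → ℝ := fun x => Aop (Aop F) x - c ^ 2 * F x

/-- Membership in `W^{2,∞}(ℝ)`. -/
def IsW2inf (S : ℝ → ℝ) : Prop :=
  Differentiable ℝ S ∧ (∃ C : ℝ, ∀ x, |S x| ≤ C ∧ |deriv S x| ≤ C) ∧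
    ∃ K : NNReal, LipschitzWith K (deriv S)

/-- Assumption A for the family `(Ψ_δ)_{δ>0}` with constant `C_Ψ`. -/
def AssumptionA (Ψ : ℝ → ℝ → ℝ) (CΨ : ℝ) : Prop :=
  0 < CΨ ∧ ∀ δ : ℝ, 0 < δ →
    Ψ δ 0 = 0 ∧ ContDiff ℝ 2 (Ψ δ) ∧
    (∀ r : ℝ, δ ≤ |r| → deriv (Ψ δ) r = Real.sign r) ∧
    (∀ r : ℝ, |deriv (Ψ δ) r| ≤ CΨ) ∧
    (∀ r : ℝ, |deriv (deriv (Ψ δ)) r| ≤ CΨ / δ)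

/-- The quantity `I_δ = ½ ∫_ℝ (Ψ'_δ(r) − sgn r) dr`. -/
noncomputable def Idelta (Ψ : ℝ → ℝ → ℝ) (δ : ℝ) : ℝ :=
  (1 / 2) * ∫ r : ℝ, (deriv (Ψ δ) r - Real.sign r)

/-- An unperturbed wave `R₀`: a `W^{2,∞}` solution of `M R₀ = A²(sgn ∘ R₀) + μ₀` with
`R₀(0) = 0` which leaves a neighbourhood of `0` monotonically and stays away from `0`. -/
def UnperturbedWave (c : ℝ) (R₀ : ℝ → ℝ) : Prop :=
  IsW2inf R₀ ∧ R₀ 0 = 0 ∧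
  (∃ μ₀ : ℝ, ∀ x, Mop c R₀ x = Aop (Aop (fun y => Real.sign (R₀ y))) x + μ₀) ∧
  ∃ x₀ r₀ d₀ : ℝ, 0 < x₀ ∧ 0 < r₀ ∧ 0 < d₀ ∧
    (∀ x, x₀ < x → r₀ < R₀ x) ∧ (∀ x, x < -x₀ → R₀ x < -r₀) ∧
    (∀ x, |x| < x₀ → d₀ < deriv R₀ x)

/-- `δ`-admissibility of a corrector `S` relative to `R₀`. -/
def Admissible (δ : ℝ) (R₀ S : ℝ → ℝ) : Prop :=
  IsW2inf S ∧ S 0 = 0 ∧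
  ∃ xm xp : ℝ, xm < 0 ∧ 0 < xp ∧
    R₀ xm + S xm = -δ ∧ R₀ xp + S xp = δ ∧
    (∀ x, x < xm → R₀ x + S x < -δ) ∧
    (∀ x, xp < x → δ < R₀ x + S x) ∧
    (∀ x, xm < x → x < xp →
      deriv R₀ 0 / 2 < deriv R₀ x + deriv S x ∧ deriv R₀ x + deriv S x < 2 * deriv R₀ 0)

/-- The nonlinear superposition operator `G(S)(x) = Ψ'_δ(R₀(x)+S(x)) − sgn(R₀(x))`. -/
noncomputable def Gop (Ψ : ℝ → ℝ → ℝ) (δ : ℝ) (R₀ S : ℝ → ℝ) : ℝ → ℝ :=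
  fun x => deriv (Ψ δ) (R₀ x + S x) - Real.sign (R₀ x)

/-- The symbol `a(k) = sin(k/2)/(k/2)`, with `a(0) = 1`. -/
noncomputable def symb (k : ℝ) : ℝ := if k = 0 then 1 else Real.sin (k / 2) / (k / 2)

/-- The symbol `m(k) = a(k)² - c²`. -/
noncomputable def msymb (c : ℝ) : ℝ → ℝ := fun k => (symb k) ^ 2 - c ^ 2

open ContinuousLinearMap (lsmul)
open scoped Convolution FourierTransform Asymptotics

/-!
The difference `S` of two waves solves `M S = A² g + const`, where `g` is supported in
`[-δ^κ, δ^κ]` and `|g| ≤ (C_Ψ / δ) |S|`. The symbol `m` has only the simple zeros `±k_c`, and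
`(k_c² - c⁻² (2 - 2 cos k)) a(k)²` vanishes there too, so the quotient of the two is smooth; it
decays because `k² m(k) = 2 - 2 cos k - c² k²`. Its inverse Fourier transform `v` is an integrable
kernel, and convolving the equation for `S` with `v` turns it into a forced oscillator
`S'' + k_c² S = f + const` with `‖f‖₁ ≤ Λ ‖g‖₁`. Hence `S` is asymptotic to a harmonic oscillation
plus a constant, and if the oscillation is trivial then `|S'| ≤ Λ ‖g‖₁`. In that case `S 0 = 0`
gives `‖g‖₁ ≤ 2 Λ C_Ψ δ^(2κ-1) ‖g‖₁`, which forces `S = 0` once `δ` is small.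
-/

section Convolution

variable {G : Type*} [AddCommGroup G] [MeasurableSpace G] [MeasurableAdd₂ G] [MeasurableNeg G]
  {μ : Measure G} [μ.IsAddLeftInvariant] {f g k : G → ℝ} {C : ℝ}

lemma convolution_real_comm [μ.IsNegInvariant] (f g : G → ℝ) :
    f ⋆[lsmul ℝ ℝ, μ] g = g ⋆[lsmul ℝ ℝ, μ] f := by
  ext x
  rw [convolution_lsmul_swap, convolution_lsmul]
  simp only [smul_eq_mul, mul_comm]

variable [SFinite μ]

lemma convolutionExists_of_bounded {L : ℝ →L[ℝ] ℝ →L[ℝ] ℝ} (hf : Integrable f μ)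
    (hg : AEStronglyMeasurable g μ) (hC : ∀ x, |g x| ≤ C) : ConvolutionExists f g L μ :=
  fun _ => BddAbove.convolutionExistsAt L ⟨C, Set.forall_mem_image.2 fun y _ => hC y⟩
    MeasurableSet.univ (Set.subset_univ _) hf.integrableOn hg

lemma convolution_assoc_of_bounded (hf : Integrable f μ) (hg : Integrable g μ)
    (hk : AEStronglyMeasurable k μ) (hC : ∀ x, |k x| ≤ C) :
    (f ⋆[lsmul ℝ ℝ, μ] g) ⋆[lsmul ℝ ℝ, μ] k = f ⋆[lsmul ℝ ℝ, μ] (g ⋆[lsmul ℝ ℝ, μ] k) := by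
  ext x
  refine convolution_assoc' _ _ _ _ (fun a b c => mul_assoc a b c)
    (hf.ae_convolution_exists _ hg)
    (ae_of_all _ (convolutionExists_of_bounded hg hk hC)) ?_
  have hkx : AEStronglyMeasurable (fun p : G × G => k (x - p.1)) (μ.prod μ) :=
    (hk.comp_quasiMeasurePreserving
      (quasiMeasurePreserving_sub_left_of_right_invariant μ x)).comp_fst
  exact ((hf.convolution_integrand (lsmul ℝ ℝ) hg).mul_bdd (c := C) hkx
    (ae_of_all _ fun p => hC _)).congr (ae_of_all _ fun p => mul_assoc _ _ _)

lemma integral_abs_convolution_le (hf : Integrable f μ) (hg : Integrable g μ) :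
    ∫ x, |(f ⋆[lsmul ℝ ℝ, μ] g) x| ∂μ ≤ (∫ x, |f x| ∂μ) * ∫ x, |g x| ∂μ := by
  calc ∫ x, |(f ⋆[lsmul ℝ ℝ, μ] g) x| ∂μ
      ≤ ∫ x, ((fun y => |f y|) ⋆[lsmul ℝ ℝ, μ] fun y => |g y|) x ∂μ := by
        refine integral_mono (hf.integrable_convolution _ hg).abs
          (hf.abs.integrable_convolution _ hg.abs) fun x => ?_
        simpa only [convolution_lsmul, smul_eq_mul, abs_mul] using
          abs_integral_le_integral_abs (f := fun t => f t * g (x - t)) (μ := μ)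
    _ = (∫ x, |f x| ∂μ) * ∫ x, |g x| ∂μ := integral_convolution _ hf.abs hg.abs

end Convolution

section Averaging

variable {F f g G : ℝ → ℝ} {C : ℝ}

/-- The convolution kernel of the averaging operator `Aop`. -/
noncomputable def unitBox : ℝ → ℝ := (Set.Ioc (-1 / 2) (1 / 2)).indicator 1

lemma integrable_unitBox : Integrable unitBox :=
  (integrable_indicator_iff measurableSet_Ioc).2 (integrableOn_const (by simp))

lemma integral_abs_unitBox : ∫ x, |unitBox x| = 1 := by
  have h : (fun x => |unitBox x|) = (Set.Ioc (-1 / 2) (1 / 2)).indicator 1 := by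
    ext x
    exact abs_of_nonneg (Set.indicator_nonneg (fun _ _ => zero_le_one) x)
  rw [h, integral_indicator_one measurableSet_Ioc, Real.volume_real_Ioc]
  norm_num

lemma Aop_eq_unitBox_convolution (F : ℝ → ℝ) : Aop F = unitBox ⋆ F := by
  ext x
  have h : ∀ t, unitBox t • F (x - t) =
      (Set.Ioc (-1 / 2 : ℝ) (1 / 2)).indicator (fun t => F (x - t)) t := fun t => by
    simp [unitBox, Set.indicator_apply]
  rw [convolution_lsmul, integral_congr_ae (ae_of_all _ h), integral_indicator measurableSet_Ioc,
    ← intervalIntegral.integral_of_le (by norm_num), intervalIntegral.integral_comp_sub_left, Aop]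
  congr 1; ring

lemma Aop_eq_primitive_sub (hF : LocallyIntegrable F) :
    Aop F = fun x => (∫ s in (0 : ℝ)..(x + 1 / 2), F s) - ∫ s in (0 : ℝ)..(x - 1 / 2), F s := by
  ext x
  have hI (a b : ℝ) : IntervalIntegrable F volume a b :=
    (hF.integrableOn_isCompact isCompact_uIcc).intervalIntegrable
  exact (intervalIntegral.integral_interval_sub_left (hI _ _) (hI _ _)).symm

lemma continuous_Aop (hF : LocallyIntegrable F) : Continuous (Aop F) := by
  have h : Continuous fun y => ∫ s in (0 : ℝ)..y, F s :=
    intervalIntegral.continuous_primitive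
      (fun a b => (hF.integrableOn_isCompact isCompact_uIcc).intervalIntegrable) 0
  rw [Aop_eq_primitive_sub hF]
  fun_prop

lemma hasDerivAt_Aop (hF : Continuous F) (x : ℝ) :
    HasDerivAt (Aop F) (F (x + 1 / 2) - F (x - 1 / 2)) x := by
  have h (y : ℝ) : HasDerivAt (fun y => ∫ s in (0 : ℝ)..y, F s) (F y) y :=
    intervalIntegral.integral_hasDerivAt_right (hF.intervalIntegrable _ _)
      (hF.stronglyMeasurableAtFilter _ _) hF.continuousAt
  rw [Aop_eq_primitive_sub hF.locallyIntegrable]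
  exact ((h _).comp_add_const x (1 / 2)).sub ((h _).comp_sub_const x (1 / 2))

lemma abs_Aop_le (hC : ∀ x, |F x| ≤ C) (x : ℝ) : |Aop F x| ≤ C := by
  have h := intervalIntegral.norm_integral_le_of_norm_le_const (a := x - 1 / 2) (b := x + 1 / 2)
    (fun y _ => (Real.norm_eq_abs (F y)).trans_le (hC y))
  rwa [show x + 1 / 2 - (x - 1 / 2) = 1 by ring, abs_one, mul_one] at h

lemma Aop_sub (hF : LocallyIntegrable F) (hG : LocallyIntegrable G) :
    Aop (F - G) = Aop F - Aop G := by
  ext x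
  exact intervalIntegral.integral_sub
    (hF.integrableOn_isCompact isCompact_uIcc).intervalIntegrable
    (hG.integrableOn_isCompact isCompact_uIcc).intervalIntegrable

lemma Aop_Aop_sub (hF : LocallyIntegrable F) (hG : LocallyIntegrable G) :
    Aop (Aop (F - G)) = Aop (Aop F) - Aop (Aop G) := by
  rw [Aop_sub hF hG, Aop_sub (continuous_Aop hF).locallyIntegrable
    (continuous_Aop hG).locallyIntegrable]

lemma integrable_Aop (hF : Integrable F) : Integrable (Aop F) := by
  rw [Aop_eq_unitBox_convolution]
  exact integrable_unitBox.integrable_convolution _ hF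

lemma integral_abs_Aop_le (hF : Integrable F) : ∫ x, |Aop F x| ≤ ∫ x, |F x| := by
  have h := integral_abs_convolution_le integrable_unitBox hF
  rwa [integral_abs_unitBox, one_mul, ← Aop_eq_unitBox_convolution] at h

lemma Aop_convolution (hf : Integrable f) (hG : Continuous G) (hC : ∀ x, |G x| ≤ C) :
    Aop f ⋆ G = f ⋆ Aop G := by
  rw [Aop_eq_unitBox_convolution, Aop_eq_unitBox_convolution, convolution_real_comm unitBox f,
    convolution_assoc_of_bounded hf integrable_unitBox hG.aestronglyMeasurable hC]

lemma Mop_eq_add_smul (c : ℝ) (F : ℝ → ℝ) : Mop c F = Aop (Aop F) + (-c ^ 2) • F := by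
  ext x
  simp only [Mop, Pi.add_apply, Pi.smul_apply, smul_eq_mul]
  ring

lemma Mop_sub (c : ℝ) (hF : LocallyIntegrable F) (hG : LocallyIntegrable G) :
    Mop c (F - G) = Mop c F - Mop c G := by
  simp only [Mop_eq_add_smul, Aop_Aop_sub hF hG, smul_sub]
  abel

lemma integrable_Mop (c : ℝ) (hF : Integrable F) : Integrable (Mop c F) :=
  (integrable_Aop (integrable_Aop hF)).sub (hF.const_mul _)

lemma continuous_Mop (c : ℝ) (hF : Continuous F) : Continuous (Mop c F) :=
  (continuous_Aop (continuous_Aop hF.locallyIntegrable).locallyIntegrable).sub (hF.const_mul _)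

lemma Mop_convolution (c : ℝ) (hf : Integrable f) (hG : Continuous G) (hC : ∀ x, |G x| ≤ C) :
    Mop c f ⋆ G = f ⋆ Mop c G := by
  have hAG := continuous_Aop hG.locallyIntegrable
  have hAAG := continuous_Aop hAG.locallyIntegrable
  have hAC := abs_Aop_le hC
  rw [Mop_eq_add_smul, Mop_eq_add_smul,
    ConvolutionExists.add_distrib (convolutionExists_of_bounded
      (integrable_Aop (integrable_Aop hf)) hG.aestronglyMeasurable hC)
      (convolutionExists_of_bounded (hf.smul _) hG.aestronglyMeasurable hC),
    ConvolutionExists.distrib_add (convolutionExists_of_bounded hf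
      hAAG.aestronglyMeasurable (abs_Aop_le hAC))
      (convolutionExists_of_bounded (C := |-c ^ 2| * C) hf (hG.const_smul _).aestronglyMeasurable
        fun x => (abs_mul _ _).trans_le (mul_le_mul_of_nonneg_left (hC x) (abs_nonneg _))),
    Aop_convolution (integrable_Aop hf) hG hC, Aop_convolution hf hAG hAC,
    smul_convolution, convolution_smul]

end Averaging

section LatticeHelmholtz

variable {p q C : ℝ} {F v G : ℝ → ℝ}

/-- The operator `p + q Δ₁` on functions on the line, where `Δ₁` is the second difference with
unit step. For `p = k_c²` and `q = c⁻²` it vanishes on the waves with wave number `k_c`. -/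
def latticeHelmholtz (p q : ℝ) (F : ℝ → ℝ) : ℝ → ℝ :=
  fun x => p * F x + q * (F (x + 1) + F (x - 1) - 2 * F x)

lemma continuous_latticeHelmholtz (hF : Continuous F) : Continuous (latticeHelmholtz p q F) := by
  unfold latticeHelmholtz
  fun_prop

lemma integrable_latticeHelmholtz (hF : Integrable F) : Integrable (latticeHelmholtz p q F) :=
  (hF.const_mul p).add
    ((((hF.comp_add_right 1).add (hF.comp_sub_right 1)).sub (hF.const_mul 2)).const_mul q)

lemma integral_abs_latticeHelmholtz_le (hF : Integrable F) :
    ∫ x, |latticeHelmholtz p q F x| ≤ (|p| + 4 * |q|) * ∫ x, |F x| := by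
  have hr := hF.abs.comp_add_right 1
  have hl := hF.abs.comp_sub_right 1
  have hrl : Integrable fun x => |F (x + 1)| + |F (x - 1)| := hr.add hl
  have hpt (x : ℝ) : |latticeHelmholtz p q F x| ≤
      (|p| + 2 * |q|) * |F x| + |q| * (|F (x + 1)| + |F (x - 1)|) :=
    calc |latticeHelmholtz p q F x|
        ≤ |p| * |F x| + |q| * |F (x + 1) + F (x - 1) - 2 * F x| := by
          rw [← abs_mul, ← abs_mul]
          exact abs_add_le _ _
      _ ≤ |p| * |F x| + |q| * (|F (x + 1)| + |F (x - 1)| + 2 * |F x|) := by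
          gcongr
          refine (abs_sub _ _).trans (add_le_add (abs_add_le _ _) ?_)
          rw [abs_mul, abs_two]
      _ = _ := by ring
  refine (integral_mono (integrable_latticeHelmholtz hF).abs
    ((hF.abs.const_mul _).add (hrl.const_mul _)) hpt).trans_eq ?_
  rw [integral_add' (hF.abs.const_mul _) (hrl.const_mul _), integral_const_mul,
    integral_const_mul, integral_add hr hl, integral_add_right_eq_self (fun x => |F x|),
    integral_sub_right_eq_self (fun x => |F x|)]
  ring

lemma convolution_latticeHelmholtz (h : ConvolutionExists v G (lsmul ℝ ℝ)) :
    v ⋆ latticeHelmholtz p q G = latticeHelmholtz p q (v ⋆ G) := by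
  ext x
  have h₀ : Integrable fun t => v t * G (x - t) := h x
  have hr : Integrable fun t => v t * G (x + 1 - t) := h (x + 1)
  have hl : Integrable fun t => v t * G (x - 1 - t) := h (x - 1)
  have hrl : Integrable fun t => v t * G (x + 1 - t) + v t * G (x - 1 - t) := hr.add hl
  have hΔ : Integrable fun t =>
      v t * G (x + 1 - t) + v t * G (x - 1 - t) - 2 * (v t * G (x - t)) :=
    hrl.sub (h₀.const_mul 2)
  simp only [convolution_lsmul, latticeHelmholtz, smul_eq_mul]
  rw [← integral_add hr hl, ← integral_const_mul 2, ← integral_sub hrl (h₀.const_mul 2),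
    ← integral_const_mul, ← integral_const_mul, ← integral_add (h₀.const_mul p) (hΔ.const_mul q)]
  congr 1 with t
  rw [sub_add_eq_add_sub, sub_right_comm x t 1]
  ring

lemma latticeHelmholtz_convolution (hv : Integrable v) (hG : Continuous G) (hC : ∀ x, |G x| ≤ C) :
    latticeHelmholtz p q v ⋆ G = latticeHelmholtz p q (v ⋆ G) := by
  rw [convolution_real_comm, convolution_latticeHelmholtz, convolution_real_comm]
  exact fun x => (convolutionExistsAt_flip (L := lsmul ℝ ℝ)).1
    (convolutionExists_of_bounded (L := (lsmul ℝ ℝ).flip) hv hG.aestronglyMeasurable hC x)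

lemma latticeHelmholtz_cos (p q k : ℝ) :
    latticeHelmholtz p q (fun x => cos (k * x)) =
      fun x => (p - q * (2 - 2 * cos k)) * cos (k * x) := by
  ext x
  simp only [latticeHelmholtz, mul_add, mul_sub, mul_one, cos_add, cos_sub]
  ring

lemma latticeHelmholtz_const_mul (a : ℝ) (F : ℝ → ℝ) :
    latticeHelmholtz p q (fun x => a * F x) = fun x => a * latticeHelmholtz p q F x := by
  ext x
  simp only [latticeHelmholtz]
  ring

end LatticeHelmholtz

section Fourier

lemma iteratedDeriv_ofReal_comp {f : ℝ → ℝ} {n : ℕ} (hf : ContDiff ℝ n f) :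
    iteratedDeriv n (fun x : ℝ => (f x : ℂ)) = fun x => ((iteratedDeriv n f x : ℝ) : ℂ) := by
  ext x
  rw [iteratedDeriv, iteratedDeriv]
  change iteratedFDeriv ℝ n (Complex.ofRealCLM ∘ f) x _ = _
  rw [ContinuousLinearMap.iteratedFDeriv_comp_left _ hf.contDiffAt le_rfl]
  rfl

lemma integrable_fourier_of_integrable_iteratedDeriv {E : Type*} [NormedAddCommGroup E]
    [NormedSpace ℂ E] {f : ℝ → E} (hf : ContDiff ℝ 2 f)
    (hi : ∀ n ≤ 2, Integrable (iteratedDeriv n f)) : Integrable (𝓕 f) := by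
  have hi₀ : Integrable f := by simpa only [iteratedDeriv_zero] using hi 0 zero_le_two
  have hle (g : ℝ → E) (w : ℝ) : ‖𝓕 g w‖ ≤ ∫ x, ‖g x‖ :=
    VectorFourier.norm_fourierIntegral_le_integral_norm _ _ (innerₗ ℝ) g w
  have h₂ : 𝓕 (iteratedDeriv 2 f) = fun w : ℝ => (2 * π * Complex.I * w) ^ 2 • 𝓕 f w :=
    Real.fourier_iteratedDeriv (N := 2) hf (fun n hn => hi n (by exact_mod_cast hn)) le_rfl
  have hdecay (w : ℝ) : ‖𝓕 f w‖ ≤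
      ((∫ x, ‖f x‖) + ∫ x, ‖iteratedDeriv 2 f x‖) * (1 + w ^ 2)⁻¹ := by
    have hw₂ : (2 * π) ^ 2 * w ^ 2 * ‖𝓕 f w‖ ≤ ∫ x, ‖iteratedDeriv 2 f x‖ := by
      have h := hle (iteratedDeriv 2 f) w
      rw [h₂] at h
      simpa [norm_smul, mul_pow, abs_of_pos pi_pos] using h
    have hπ : 1 ≤ (2 * π) ^ 2 := by nlinarith [pi_gt_three]
    rw [← div_eq_mul_inv, le_div_iff₀ (by positivity), mul_add, mul_one, mul_comm _ (w ^ 2)]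
    refine add_le_add (hle f w) (le_trans ?_ hw₂)
    rw [mul_assoc]
    exact le_mul_of_one_le_left (by positivity) hπ
  have hcont : Continuous (𝓕 f) :=
    VectorFourier.fourierIntegral_continuous continuous_fourierChar continuous_inner hi₀
  exact (integrable_inv_one_add_sq.const_mul _).mono' hcont.aestronglyMeasurable
    (ae_of_all _ hdecay)

lemma fourier_ofReal_comp {v : ℝ → ℝ} (hv : Integrable v) (w : ℝ) :
    𝓕 (fun x => (v x : ℂ)) w = ((∫ x, v x * cos (2 * π * w * x) : ℝ) : ℂ)
      - ((∫ x, v x * sin (2 * π * w * x) : ℝ) : ℂ) * Complex.I := by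
  have hc : Integrable fun x => v x * cos (2 * π * w * x) :=
    hv.mul_bdd (c := 1) (by fun_prop) (ae_of_all _ fun x => abs_cos_le_one _)
  have hs : Integrable fun x => v x * sin (2 * π * w * x) :=
    hv.mul_bdd (c := 1) (by fun_prop) (ae_of_all _ fun x => abs_sin_le_one _)
  rw [Real.fourier_real_eq_integral_exp_smul, ← integral_complex_ofReal, ← integral_complex_ofReal,
    ← integral_mul_const, ← integral_sub hc.ofReal (hs.ofReal.mul_const _)]
  congr 1 with x
  rw [show -2 * π * x * w = -(2 * π * w * x) by ring, Complex.exp_mul_I, ← Complex.ofReal_cos,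
    ← Complex.ofReal_sin, cos_neg, sin_neg, smul_eq_mul]
  push_cast
  ring

end Fourier

section CosSymbol

/-- The integrable kernel `v` acts by convolution on the cosine of each wave number `k` as
multiplication by `h k`; this forces `h` to be the (real) Fourier symbol of `v`. -/
structure HasCosSymbol (v h : ℝ → ℝ) : Prop where
  integrable : Integrable v
  convolution_cos : ∀ k, v ⋆ (fun x => cos (k * x)) = fun x => h k * cos (k * x)

variable {v w h j : ℝ → ℝ}

lemma hasCosSymbol_iff_fourier (hv : Integrable v) :
    HasCosSymbol v h ↔ ∀ ξ, 𝓕 (fun x => (v x : ℂ)) ξ = h (2 * π * ξ) := by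
  have hconv (k x : ℝ) : (v ⋆ fun x => cos (k * x)) x =
      cos (k * x) * (∫ t, v t * cos (k * t)) + sin (k * x) * ∫ t, v t * sin (k * t) := by
    have hc : Integrable fun t => v t * cos (k * t) :=
      hv.mul_bdd (c := 1) (by fun_prop) (ae_of_all _ fun x => abs_cos_le_one _)
    have hs : Integrable fun t => v t * sin (k * t) :=
      hv.mul_bdd (c := 1) (by fun_prop) (ae_of_all _ fun x => abs_sin_le_one _)
    rw [convolution_lsmul, ← integral_const_mul, ← integral_const_mul,
      ← integral_add (hc.const_mul _) (hs.const_mul _)]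
    congr 1 with t
    rw [mul_sub, cos_sub, smul_eq_mul]
    ring
  constructor
  · intro hvh ξ
    set k := 2 * π * ξ
    have hcos : ∫ t, v t * cos (k * t) = h k := by
      simpa [hvh.convolution_cos] using (hconv k 0).symm
    have hsin : ∫ t, v t * sin (k * t) = 0 := by
      rcases eq_or_ne k 0 with hk | hk
      · simp [hk]
      · have hq : k * (π / 2 / k) = π / 2 := by field_simp
        simpa [hvh.convolution_cos, hq] using (hconv k (π / 2 / k)).symm
    rw [fourier_ofReal_comp hv, hcos, hsin, Complex.ofReal_zero, zero_mul, sub_zero]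
  · refine fun hF => ⟨hv, fun k => funext fun x => ?_⟩
    have hk := hF (k / (2 * π))
    rw [fourier_ofReal_comp hv, mul_div_cancel₀ k two_pi_pos.ne'] at hk
    have hcos : ∫ t, v t * cos (k * t) = h k := by simpa using congrArg Complex.re hk
    have hsin : ∫ t, v t * sin (k * t) = 0 := by simpa using congrArg Complex.im hk
    rw [hconv, hcos, hsin, mul_zero, add_zero, mul_comm]

lemma HasCosSymbol.sub (hv : HasCosSymbol v h) (hw : HasCosSymbol w j) :
    HasCosSymbol (v - w) (h - j) := by
  refine ⟨hv.integrable.sub hw.integrable, fun k => funext fun x => ?_⟩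
  have hi {u : ℝ → ℝ} (hu : Integrable u) : Integrable fun t => u t • cos (k * (x - t)) :=
    hu.mul_bdd (c := 1) (by fun_prop) (ae_of_all _ fun t => abs_cos_le_one _)
  calc ((v - w) ⋆ fun x => cos (k * x)) x
      = (v ⋆ fun x => cos (k * x)) x - (w ⋆ fun x => cos (k * x)) x := by
        simp only [convolution_lsmul, Pi.sub_apply, sub_smul]
        exact integral_sub (hi hv.integrable) (hi hw.integrable)
    _ = (h - j) k * cos (k * x) := by
        rw [hv.convolution_cos, hw.convolution_cos, Pi.sub_apply, sub_mul]

lemma HasCosSymbol.eq_of_continuous (hv : HasCosSymbol v h) (hw : HasCosSymbol w h)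
    (hvc : Continuous v) (hwc : Continuous w) : v = w := by
  have hsub : HasCosSymbol (v - w) 0 := by simpa only [sub_self] using hv.sub hw
  have h₀ : 𝓕 (fun x => ((v - w) x : ℂ)) = 0 := by
    ext ξ
    simpa using (hasCosSymbol_iff_fourier hsub.integrable).1 hsub ξ
  have hinv := Continuous.fourierInv_fourier_eq (f := fun x => ((v - w) x : ℂ))
    (Complex.continuous_ofReal.comp (hvc.sub hwc)) hsub.integrable.ofReal
    (h₀ ▸ integrable_zero _ _ _)
  ext x
  have hx := congrFun hinv x
  rw [h₀, Real.fourierInv_eq] at hx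
  simpa [sub_eq_zero, eq_comm] using hx

lemma exists_hasCosSymbol (heven : ∀ k, h (-k) = h k) (hh : ContDiff ℝ 2 h)
    (hi : ∀ n ≤ 2, Integrable (iteratedDeriv n h)) : ∃ v, Continuous v ∧ HasCosSymbol v h := by
  set H : ℝ → ℂ := fun ξ => (h (2 * π * ξ) : ℂ)
  have hscaled : ContDiff ℝ 2 fun ξ => h (2 * π * ξ) := by fun_prop
  have hHc : ContDiff ℝ 2 H := Complex.ofRealCLM.contDiff.comp hscaled
  have hHi (n : ℕ) (hn : n ≤ 2) : Integrable (iteratedDeriv n H) := by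
    have hn' : (n : WithTop ℕ∞) ≤ 2 := by exact_mod_cast hn
    rw [iteratedDeriv_ofReal_comp (hscaled.of_le hn'),
      iteratedDeriv_comp_const_mul (hh.of_le hn')]
    exact (((hi n hn).comp_mul_left' two_pi_pos.ne').const_mul _).ofReal
  have hH₀ : Integrable H := by simpa only [iteratedDeriv_zero] using hHi 0 zero_le_two
  have hWi : Integrable (𝓕 H) := integrable_fourier_of_integrable_iteratedDeriv hHc hHi
  have hWc : Continuous (𝓕 H) :=
    VectorFourier.fourierIntegral_continuous continuous_fourierChar continuous_inner hH₀
  have hHre : Integrable fun ξ => h (2 * π * ξ) := hH₀.re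
  set v : ℝ → ℝ := fun x => (𝓕 H x).re
  have hW : 𝓕 H = fun x => (v x : ℂ) := by
    ext x
    have hodd : ∫ ξ, h (2 * π * ξ) * sin (2 * π * x * ξ) = 0 := by
      have hneg := integral_neg_eq_self (fun ξ => h (2 * π * ξ) * sin (2 * π * x * ξ)) volume
      simp only [mul_neg, heven, sin_neg, integral_neg] at hneg
      linarith
    simp only [v, H]
    rw [fourier_ofReal_comp hHre, hodd, Complex.ofReal_zero, zero_mul, sub_zero,
      Complex.ofReal_re]
  have hvi : Integrable v := hWi.re
  refine ⟨v, Complex.continuous_re.comp hWc, (hasCosSymbol_iff_fourier hvi).2 fun ξ => ?_⟩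
  have hinv : 𝓕⁻ (𝓕 H) (-ξ) = H (-ξ) :=
    congrFun (hHc.continuous.fourierInv_fourier_eq hH₀ hWi) _
  rw [Real.fourierInv_eq_fourier_neg, neg_neg, hW] at hinv
  simp only [hinv, H, mul_neg, heven]

end CosSymbol

section Symbols

variable {v h : ℝ → ℝ}

lemma sq_mul_symb_sq (k : ℝ) : k ^ 2 * symb k ^ 2 = 2 - 2 * cos k := by
  rcases eq_or_ne k 0 with rfl | hk
  · simp
  · have hcos : cos k = 1 - 2 * sin (k / 2) ^ 2 := by
      rw [← cos_sq_add_sin_sq (k / 2)]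
      nth_rewrite 1 [← mul_div_cancel₀ k two_ne_zero]
      rw [cos_two_mul']
      ring
    rw [symb, if_neg hk, hcos]
    field_simp
    ring

lemma Aop_const_mul (a : ℝ) (F : ℝ → ℝ) : Aop (fun x => a * F x) = fun x => a * Aop F x :=
  funext fun _ => intervalIntegral.integral_const_mul a F

lemma Aop_cos (k : ℝ) : Aop (fun x => cos (k * x)) = fun x => symb k * cos (k * x) := by
  ext x
  rcases eq_or_ne k 0 with rfl | hk
  · simp [Aop, symb]; norm_num
  · rw [Aop, symb, if_neg hk, intervalIntegral.integral_comp_mul_left _ hk, integral_cos,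
      show k * (x + 1 / 2) = k * x + k / 2 by ring, show k * (x - 1 / 2) = k * x - k / 2 by ring,
      sin_add, sin_sub, smul_eq_mul]
    field_simp
    ring

lemma Mop_cos (c k : ℝ) : Mop c (fun x => cos (k * x)) = fun x => msymb c k * cos (k * x) := by
  ext x
  rw [Mop, Aop_cos, Aop_const_mul, Aop_cos, msymb]
  ring

lemma hasCosSymbol_unitBox : HasCosSymbol unitBox symb :=
  ⟨integrable_unitBox, fun k => by rw [← Aop_eq_unitBox_convolution, Aop_cos]⟩

namespace HasCosSymbol

lemma convolution_const_mul_cos (hv : HasCosSymbol v h) (a k : ℝ) :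
    v ⋆ (fun x => a * cos (k * x)) = fun x => a * (h k * cos (k * x)) := by
  change v ⋆ (a • fun x => cos (k * x)) = _
  rw [convolution_smul, hv.convolution_cos]
  rfl

lemma aop (hv : HasCosSymbol v h) : HasCosSymbol (Aop v) fun k => symb k * h k := by
  refine ⟨integrable_Aop hv.integrable, fun k => ?_⟩
  rw [Aop_convolution hv.integrable (by fun_prop) fun x => abs_cos_le_one _, Aop_cos,
    hv.convolution_const_mul_cos]
  simp only [mul_assoc]

lemma mop (hv : HasCosSymbol v h) (c : ℝ) :
    HasCosSymbol (Mop c v) fun k => msymb c k * h k := by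
  refine ⟨integrable_Mop c hv.integrable, fun k => ?_⟩
  rw [Mop_convolution c hv.integrable (by fun_prop) fun x => abs_cos_le_one _, Mop_cos,
    hv.convolution_const_mul_cos]
  simp only [mul_assoc]

lemma latticeHelmholtz (hv : HasCosSymbol v h) (p q : ℝ) :
    HasCosSymbol (latticeHelmholtz p q v) fun k => (p - q * (2 - 2 * cos k)) * h k := by
  refine ⟨integrable_latticeHelmholtz hv.integrable, fun k => ?_⟩
  rw [latticeHelmholtz_convolution hv.integrable (by fun_prop) fun x => abs_cos_le_one _,
    hv.convolution_cos, latticeHelmholtz_const_mul, latticeHelmholtz_cos]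
  ext x
  ring

end HasCosSymbol

end Symbols

section RemovableQuotient

variable {n m : ℝ → ℝ} {x : ℝ}

/-- The quotient `n / m`, continued across the simple zeros of `m` by l'Hôpital's rule. -/
noncomputable def simpleQuot (n m : ℝ → ℝ) (x : ℝ) : ℝ :=
  if m x = 0 then deriv n x / deriv m x else n x / m x

lemma mul_simpleQuot (h : m x = 0 → n x = 0) : m x * simpleQuot n m x = n x := by
  unfold simpleQuot
  split_ifs with hx
  · rw [hx, h hx, zero_mul]
  · exact mul_div_cancel₀ _ hx

lemma deriv_neg_of_even {f : ℝ → ℝ} (hf : ∀ x, f (-x) = f x) (x : ℝ) :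
    deriv f (-x) = -deriv f x := by
  rw [← neg_eq_iff_eq_neg, ← deriv_comp_neg, funext hf]

lemma simpleQuot_neg (hn : ∀ x, n (-x) = n x) (hm : ∀ x, m (-x) = m x) (x : ℝ) :
    simpleQuot n m (-x) = simpleQuot n m x := by
  simp only [simpleQuot, hm, hn, deriv_neg_of_even hm, deriv_neg_of_even hn, neg_div_neg_eq]

lemma analyticAt_dslope {f : ℝ → ℝ} (hf : AnalyticAt ℝ f x) : AnalyticAt ℝ (dslope f x) x := by
  obtain ⟨p, hp⟩ := hf
  exact hp.has_fpower_series_dslope_fslope.analyticAt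

lemma analyticAt_simpleQuot (hn : AnalyticAt ℝ n x) (hm : AnalyticAt ℝ m x)
    (hzero : m x = 0 → n x = 0) (hsimple : m x = 0 → deriv m x ≠ 0) :
    AnalyticAt ℝ (simpleQuot n m) x := by
  by_cases hx : m x = 0
  · have hm₀ : dslope m x x ≠ 0 := by simpa only [dslope_same] using hsimple hx
    refine ((analyticAt_dslope hn).div (analyticAt_dslope hm) hm₀).congr ?_
    filter_upwards [(analyticAt_dslope hm).continuousAt.eventually_ne hm₀] with y hy
    rcases eq_or_ne y x with rfl | hyx
    · simp only [simpleQuot, hx, if_true, Pi.div_apply, dslope_same]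
    · have hyx' : y - x ≠ 0 := sub_ne_zero.2 hyx
      have hslope {f : ℝ → ℝ} (hf : f x = 0) : f y = (y - x) * dslope f x y := by
        rw [← smul_eq_mul, sub_smul_dslope, hf, sub_zero]
      rw [simpleQuot, if_neg, hslope hx, hslope (hzero hx), mul_div_mul_left _ _ hyx',
        Pi.div_apply]
      rw [hslope hx]
      exact mul_ne_zero hyx' hy
  · refine (hn.div hm hx).congr ?_
    filter_upwards [hm.continuousAt.eventually_ne hx] with y hy
    rw [simpleQuot, if_neg hy, Pi.div_apply]

end RemovableQuotient

section Decay

lemma mul_iteratedDeriv_isBigO_of_mul_eq {𝕜 E : Type*} [NontriviallyNormedField 𝕜] [Norm E]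
    {l : Filter 𝕜} {D h N : 𝕜 → 𝕜} {u : 𝕜 → E} {n : ℕ} (hD : ContDiff 𝕜 n D)
    (hh : ContDiff 𝕜 n h) (hDh : D * h = N) (hDD : ∀ i ≤ n, iteratedDeriv i D =O[l] D)
    (hNu : ∀ i ≤ n, iteratedDeriv i N =O[l] u) {i : ℕ} (hi : i ≤ n) :
    (D * iteratedDeriv i h) =O[l] u := by
  induction i using Nat.strong_induction_on with
  | _ i ih =>
    have hin : (i : WithTop ℕ∞) ≤ n := by exact_mod_cast hi
    have hLeibniz : D * iteratedDeriv i h = iteratedDeriv i N - fun x => ∑ j ∈ Finset.range i,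
        i.choose (j + 1) * iteratedDeriv (j + 1) D x * iteratedDeriv (i - (j + 1)) h x := by
      ext x
      rw [Pi.sub_apply, ← hDh,
        iteratedDeriv_mul (hD.of_le hin).contDiffAt (hh.of_le hin).contDiffAt,
        Finset.sum_range_succ']
      simp
    rw [hLeibniz]
    refine (hNu i hi).sub (Asymptotics.IsBigO.fun_sum fun j hj => ?_)
    have hj' : j + 1 ≤ i := Finset.mem_range.1 hj
    have hlower := ih (i - (j + 1)) (by omega) (by omega)
    simp only [mul_assoc]
    exact (((hDD (j + 1) (hj'.trans hi)).mul (Asymptotics.isBigO_refl _ l)).trans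
      hlower).const_mul_left _

lemma isBigO_one_iteratedDeriv_of_periodic {f : ℝ → ℝ} {T : ℝ} {n : ℕ}
    (hf : Function.Periodic f T) (hT : T ≠ 0) (hc : ContDiff ℝ n f) (l : Filter ℝ) :
    iteratedDeriv n f =O[l] (1 : ℝ → ℝ) := by
  have hper : Function.Periodic (iteratedDeriv n f) T := fun x => by
    rw [← congrFun (iteratedDeriv_comp_add_const n f T) x, funext hf]
  obtain ⟨C, hC⟩ := (hper.isBounded_of_continuous hT
    (hc.continuous_iteratedDeriv n le_rfl)).exists_norm_le
  exact .of_bound C (Eventually.of_forall fun x => by simpa using hC _ ⟨x, rfl⟩)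

lemma tendsto_sq_cocompact_atTop : Tendsto (fun k : ℝ => k ^ 2) (cocompact ℝ) atTop := by
  simpa only [Function.comp_def, Real.norm_eq_abs, sq_abs] using
    (tendsto_pow_atTop two_ne_zero).comp (tendsto_norm_cocompact_atTop (E := ℝ))

lemma isBigO_one_sq_cocompact : (1 : ℝ → ℝ) =O[cocompact ℝ] fun k : ℝ => k ^ 2 :=
  .of_bound' <| (tendsto_sq_cocompact_atTop.eventually_ge_atTop 1).mono fun k hk => by
    simpa using hk

lemma iteratedDeriv_sq_isBigO_cocompact (n : ℕ) :
    iteratedDeriv n (fun k : ℝ => k ^ 2) =O[cocompact ℝ] fun k => k ^ 2 := by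
  refine .of_bound (Nat.descFactorial 2 n) ?_
  filter_upwards [tendsto_norm_cocompact_atTop.eventually_ge_atTop 1] with k hk
  rw [iteratedDeriv_pow, norm_mul, norm_pow, norm_pow, Real.norm_natCast]
  gcongr
  exact Nat.sub_le 2 n

variable {P N h : ℝ → ℝ} {a T : ℝ} {n : ℕ}

lemma sq_isBigO_periodic_sub_sq (ha : a ≠ 0) (hT : T ≠ 0) (hP : Function.Periodic P T)
    (hPc : Continuous P) : (fun k : ℝ => k ^ 2) =O[cocompact ℝ] fun k => P k - a * k ^ 2 := by
  have hP_one : P =O[cocompact ℝ] (1 : ℝ → ℝ) := by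
    simpa only [iteratedDeriv_zero] using
      isBigO_one_iteratedDeriv_of_periodic (n := 0) hP hT (contDiff_zero.2 hPc) (cocompact ℝ)
  have hP_sq : P =o[cocompact ℝ] fun k => a * k ^ 2 :=
    (hP_one.trans_isLittleO <| (Asymptotics.isLittleO_one_left_iff ℝ).2 <|
      tendsto_norm_atTop_atTop.comp tendsto_sq_cocompact_atTop).trans_isBigO <|
        Asymptotics.isBigO_self_const_mul ha _ _
  exact (Asymptotics.isBigO_self_const_mul ha _ _).trans <| by
    simpa only [neg_sub] using hP_sq.right_isBigO_sub.neg_right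

lemma integrable_iteratedDeriv_of_periodic_sub_sq_mul (ha : a ≠ 0) (hT : T ≠ 0)
    (hP : Function.Periodic P T) (hPc : ContDiff ℝ n P) (hN : Function.Periodic N T)
    (hNc : ContDiff ℝ n N) (hh : ContDiff ℝ n h) (heq : ∀ k, (P k - a * k ^ 2) * h k = N k)
    {i : ℕ} (hi : i ≤ n) : Integrable (iteratedDeriv i h) := by
  set D : ℝ → ℝ := fun k => P k - a * k ^ 2
  have hDc : ContDiff ℝ n D := by fun_prop
  have hle {j : ℕ} (hj : j ≤ n) : (j : WithTop ℕ∞) ≤ n := by exact_mod_cast hj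
  have hkD : (fun k : ℝ => k ^ 2) =O[cocompact ℝ] D :=
    sq_isBigO_periodic_sub_sq ha hT hP hPc.continuous
  have hDD (j : ℕ) (hj : j ≤ n) : iteratedDeriv j D =O[cocompact ℝ] D := by
    have hj_eq : iteratedDeriv j D =
        fun k => iteratedDeriv j P k - a * iteratedDeriv j (fun k => k ^ 2) k := by
      ext k
      rw [← iteratedDeriv_const_mul_field,
        ← iteratedDeriv_fun_sub (hPc.of_le (hle hj)).contDiffAt (by fun_prop)]
    rw [hj_eq]
    exact (((isBigO_one_iteratedDeriv_of_periodic hP hT (hPc.of_le (hle hj)) _).trans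
      isBigO_one_sq_cocompact).sub
        ((iteratedDeriv_sq_isBigO_cocompact j).const_mul_left a)).trans hkD
  have hDh : (D * iteratedDeriv i h) =O[cocompact ℝ] (1 : ℝ → ℝ) :=
    mul_iteratedDeriv_isBigO_of_mul_eq hDc hh (funext heq) hDD
      (fun j hj => isBigO_one_iteratedDeriv_of_periodic hN hT (hNc.of_le (hle hj)) _) hi
  have hdecay : iteratedDeriv i h =O[cocompact ℝ] fun k : ℝ => (1 + k ^ 2)⁻¹ := by
    have hbound : (fun k => (1 + k ^ 2) * iteratedDeriv i h k) =O[cocompact ℝ] (1 : ℝ → ℝ) :=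
      (((isBigO_one_sq_cocompact.add (Asymptotics.isBigO_refl _ _)).trans hkD).mul
        (Asymptotics.isBigO_refl _ _)).trans hDh
    refine ((Asymptotics.isBigO_refl (fun k : ℝ => (1 + k ^ 2)⁻¹) _).mul hbound).congr
      (fun k => inv_mul_cancel_left₀ (by positivity) _) fun k => mul_one _
  exact ((hh.continuous_iteratedDeriv i (hle hi)).locallyIntegrable).integrable_of_isBigO_cocompact
    hdecay (integrable_inv_one_add_sq.integrableAtFilter _)

end Decay

section Kernel

lemma symb_neg (k : ℝ) : symb (-k) = symb k := by
  simp only [symb, neg_eq_zero, neg_div, sin_neg, div_neg, neg_neg]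

lemma msymb_neg (c k : ℝ) : msymb c (-k) = msymb c k := by
  simp only [msymb, symb_neg]

lemma deriv_msymb_neg (c k : ℝ) : deriv (msymb c) (-k) = -deriv (msymb c) k :=
  deriv_neg_of_even (msymb_neg c) k

lemma sq_mul_msymb (c k : ℝ) : k ^ 2 * msymb c k = 2 - 2 * cos k - c ^ 2 * k ^ 2 := by
  rw [msymb, mul_sub, sq_mul_symb_sq, mul_comm (c ^ 2)]

lemma analyticAt_symb (k : ℝ) : AnalyticAt ℝ symb k := by
  have hsymb : symb = fun k => simpleQuot sin id (k / 2) := by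
    ext k
    by_cases hk : k = 0 <;> simp [symb, simpleQuot, hk]
  rw [hsymb]
  exact (analyticAt_simpleQuot analyticAt_sin analyticAt_id (fun h => by simp_all)
    (by simp)).comp_of_eq analyticAt_id.div_const rfl

lemma analyticAt_msymb (c k : ℝ) : AnalyticAt ℝ (msymb c) k :=
  ((analyticAt_symb k).pow 2).sub analyticAt_const

/-- The symbol of `k_c² + c⁻² Δ₁` applied to the kernel of `A²`. The condition `m(k_c) = 0` makes
it vanish at `± k_c`, so that it is divisible by the symbol `m` of `M`. -/
noncomputable def helmholtzTentSymb (c kc k : ℝ) : ℝ :=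
  (kc ^ 2 - (c ^ 2)⁻¹ * (2 - 2 * cos k)) * (symb k * symb k)

variable {c kc : ℝ}

lemma helmholtzTentSymb_neg (k : ℝ) : helmholtzTentSymb c kc (-k) = helmholtzTentSymb c kc k := by
  simp only [helmholtzTentSymb, symb_neg, cos_neg]

lemma analyticAt_helmholtzTentSymb (k : ℝ) : AnalyticAt ℝ (helmholtzTentSymb c kc) k :=
  (analyticAt_const.sub (analyticAt_const.mul (analyticAt_const.sub
    (analyticAt_const.mul analyticAt_cos)))).mul ((analyticAt_symb k).mul (analyticAt_symb k))

lemma hasCosSymbol_latticeHelmholtz_tent : HasCosSymbol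
    (latticeHelmholtz (kc ^ 2) (c ^ 2)⁻¹ (Aop unitBox)) (helmholtzTentSymb c kc) :=
  hasCosSymbol_unitBox.aop.latticeHelmholtz _ _

/-- The symbol of the kernel that turns `M` into the Helmholtz operator `k_c² + c⁻² Δ₁` composed
with `A²`. -/
noncomputable def kernelSymb (c kc : ℝ) : ℝ → ℝ := simpleQuot (helmholtzTentSymb c kc) (msymb c)

lemma kernelSymb_neg (k : ℝ) : kernelSymb c kc (-k) = kernelSymb c kc k :=
  simpleQuot_neg helmholtzTentSymb_neg (msymb_neg c) k

lemma helmholtzTentSymb_eq_zero (hc : c ≠ 0) (hkc : msymb c kc = 0)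
    (hroots : ∀ k, k ≠ kc → k ≠ -kc → msymb c k ≠ 0) {k : ℝ} (hk : msymb c k = 0) :
    helmholtzTentSymb c kc k = 0 := by
  have hzero : helmholtzTentSymb c kc kc = 0 := by
    have hcos : 2 - 2 * cos kc = c ^ 2 * kc ^ 2 := by
      rw [← sub_eq_zero, ← sq_mul_msymb, hkc, mul_zero]
    rw [helmholtzTentSymb, hcos, inv_mul_cancel_left₀ (pow_ne_zero 2 hc), sub_self, zero_mul]
  by_cases hk₁ : k = kc
  · rwa [hk₁]
  · rw [not_ne_iff.1 fun hk₂ => hroots k hk₁ hk₂ hk, helmholtzTentSymb_neg, hzero]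

variable (hc : c ≠ 0) (hkc : msymb c kc = 0) (hsimple : deriv (msymb c) kc ≠ 0)
  (hroots : ∀ k, k ≠ kc → k ≠ -kc → msymb c k ≠ 0)
include hc hkc hroots

lemma msymb_mul_kernelSymb (k : ℝ) : msymb c k * kernelSymb c kc k = helmholtzTentSymb c kc k :=
  mul_simpleQuot (helmholtzTentSymb_eq_zero hc hkc hroots)

lemma periodic_sub_sq_mul_kernelSymb (k : ℝ) : (2 - 2 * cos k - c ^ 2 * k ^ 2) * kernelSymb c kc k =
    (kc ^ 2 - (c ^ 2)⁻¹ * (2 - 2 * cos k)) * (2 - 2 * cos k) := by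
  rw [← sq_mul_msymb, mul_assoc, msymb_mul_kernelSymb hc hkc hroots, helmholtzTentSymb,
    ← sq_mul_symb_sq]
  ring

include hsimple

lemma contDiff_kernelSymb (n : WithTop ℕ∞) : ContDiff ℝ n (kernelSymb c kc) := by
  refine contDiff_iff_contDiffAt.2 fun k => (analyticAt_simpleQuot
    (analyticAt_helmholtzTentSymb k) (analyticAt_msymb c k)
    (helmholtzTentSymb_eq_zero hc hkc hroots) fun hk => ?_).contDiffAt
  by_cases hk₁ : k = kc
  · rwa [hk₁]
  · rwa [not_ne_iff.1 fun hk₂ => hroots k hk₁ hk₂ hk, deriv_msymb_neg, neg_ne_zero]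

lemma exists_Mop_eq_latticeHelmholtz_tent : ∃ v, Integrable v ∧
    Mop c v = latticeHelmholtz (kc ^ 2) (c ^ 2)⁻¹ (Aop unitBox) := by
  obtain ⟨v, hv, hsymb⟩ := exists_hasCosSymbol (h := kernelSymb c kc) kernelSymb_neg
    (contDiff_kernelSymb hc hkc hsimple hroots 2) fun n hn =>
      integrable_iteratedDeriv_of_periodic_sub_sq_mul (pow_ne_zero 2 hc) two_pi_pos.ne'
        (fun k => by simp only [cos_add_two_pi]) (by fun_prop)
        (fun k => by simp only [cos_add_two_pi]) (by fun_prop)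
        (contDiff_kernelSymb hc hkc hsimple hroots _)
        (periodic_sub_sq_mul_kernelSymb hc hkc hroots) hn
  have hMv : HasCosSymbol (Mop c v) (helmholtzTentSymb c kc) := by
    simpa only [msymb_mul_kernelSymb hc hkc hroots] using hsymb.mop c
  exact ⟨v, hsymb.integrable, hMv.eq_of_continuous hasCosSymbol_latticeHelmholtz_tent
    (continuous_Mop c hv) (continuous_latticeHelmholtz (continuous_Aop
      integrable_unitBox.locallyIntegrable))⟩

end Kernel

section LinearEquation

lemma abs_Aop_le_integral_abs {F : ℝ → ℝ} (hF : Integrable F) (x : ℝ) : |Aop F x| ≤ ∫ y, |F y| := by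
  rw [Aop, intervalIntegral.integral_of_le (by linarith)]
  exact abs_integral_le_integral_abs.trans
    (setIntegral_le_integral hF.abs (ae_of_all _ fun y => abs_nonneg _))

lemma hasDerivAt_mul_sub_Aop {F : ℝ → ℝ} (hF : Continuous F) (q x : ℝ) :
    HasDerivAt (fun x => q * (Aop F (x + 1 / 2) - Aop F (x - 1 / 2)))
      (latticeHelmholtz 0 q F x) x := by
  have hr := (hasDerivAt_Aop hF (x + 1 / 2)).comp_add_const x (1 / 2)
  have hl := (hasDerivAt_Aop hF (x - 1 / 2)).comp_sub_const x (1 / 2)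
  convert! (hr.sub hl).const_mul q using 1
  rw [add_assoc, sub_sub x, add_halves, add_sub_cancel_right, sub_add_cancel, latticeHelmholtz]
  ring

variable {c kc μ C : ℝ} {v S g : ℝ → ℝ}

/-- The forcing `f` in the oscillator equation `S'' + k_c² S = f + const` satisfied by the bounded
solutions of `M S = A² g + const`. The kernel `v` is a solution of
`M v = (k_c² + c⁻² Δ₁) (A 1_{(-1/2,1/2]})`, where `Δ₁` is the second difference with step `1`. -/
noncomputable def oscillatorForcing (c kc : ℝ) (v g : ℝ → ℝ) : ℝ → ℝ :=
  (c ^ 2)⁻¹ • (v ⋆ Aop (Aop g) - latticeHelmholtz (kc ^ 2) (c ^ 2)⁻¹ (Aop (Aop g)))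
    - latticeHelmholtz 0 (c ^ 2)⁻¹ g

lemma integral_abs_sub_le {α : Type*} [MeasurableSpace α] {ν : Measure α} {F G : α → ℝ}
    (hF : Integrable F ν) (hG : Integrable G ν) :
    ∫ x, |(F - G) x| ∂ν ≤ (∫ x, |F x| ∂ν) + ∫ x, |G x| ∂ν :=
  (integral_mono (hF.sub hG).abs (hF.abs.add hG.abs) fun x => abs_sub (F x) (G x)).trans_eq
    (integral_add hF.abs hG.abs)

lemma integrable_oscillatorForcing (hv : Integrable v) (hg : Integrable g) :
    Integrable (oscillatorForcing c kc v g) :=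
  have hAAg := integrable_Aop (integrable_Aop hg)
  (((hv.integrable_convolution _ hAAg).sub (integrable_latticeHelmholtz hAAg)).smul _).sub
    (integrable_latticeHelmholtz hg)

lemma integral_abs_oscillatorForcing_le (hv : Integrable v) (hg : Integrable g) :
    ∫ x, |oscillatorForcing c kc v g x| ≤
      ((c ^ 2)⁻¹ * ((∫ x, |v x|) + (kc ^ 2 + 4 * (c ^ 2)⁻¹)) + 4 * (c ^ 2)⁻¹) * ∫ x, |g x| := by
  have hAAg := integrable_Aop (integrable_Aop hg)
  have hAAg_le := (integral_abs_Aop_le (integrable_Aop hg)).trans (integral_abs_Aop_le hg)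
  have hconv := hv.integrable_convolution (lsmul ℝ ℝ) hAAg
  have hL := integrable_latticeHelmholtz (p := kc ^ 2) (q := (c ^ 2)⁻¹) hAAg
  have hL₀ := integrable_latticeHelmholtz (p := 0) (q := (c ^ 2)⁻¹) hg
  have hconv_le := (integral_abs_convolution_le hv hAAg).trans
    (mul_le_mul_of_nonneg_left hAAg_le (integral_nonneg fun x => abs_nonneg _))
  have hL_le := (integral_abs_latticeHelmholtz_le (p := kc ^ 2) (q := (c ^ 2)⁻¹) hAAg).trans
    (mul_le_mul_of_nonneg_left hAAg_le (by positivity))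
  have hL₀_le := integral_abs_latticeHelmholtz_le (p := 0) (q := (c ^ 2)⁻¹) hg
  rw [abs_of_nonneg (sq_nonneg kc), abs_of_nonneg (by positivity)] at hL_le
  rw [abs_zero, abs_of_nonneg (by positivity)] at hL₀_le
  calc ∫ x, |oscillatorForcing c kc v g x|
      ≤ (c ^ 2)⁻¹ * ((∫ x, |(v ⋆ Aop (Aop g)) x|)
          + ∫ x, |latticeHelmholtz (kc ^ 2) (c ^ 2)⁻¹ (Aop (Aop g)) x|)
          + ∫ x, |latticeHelmholtz 0 (c ^ 2)⁻¹ g x| := by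
        refine (integral_abs_sub_le ((hconv.sub hL).smul _) hL₀).trans ?_
        simp only [Pi.smul_apply, smul_eq_mul, abs_mul, abs_inv, abs_pow, sq_abs]
        rw [integral_const_mul]
        gcongr
        exact integral_abs_sub_le hconv hL
    _ ≤ (c ^ 2)⁻¹ * ((∫ x, |v x|) * (∫ x, |g x|) + (kc ^ 2 + 4 * (c ^ 2)⁻¹) * ∫ x, |g x|)
          + (0 + 4 * (c ^ 2)⁻¹) * ∫ x, |g x| := by gcongr
    _ = _ := by ring

lemma latticeHelmholtz_Aop_Aop (hS : Continuous S) (hC : ∀ x, |S x| ≤ C) (hv : Integrable v)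
    {p q : ℝ} (hMv : Mop c v = latticeHelmholtz p q (Aop unitBox)) :
    latticeHelmholtz p q (Aop (Aop S)) = v ⋆ Mop c S :=
  calc latticeHelmholtz p q (Aop (Aop S)) = latticeHelmholtz p q (Aop unitBox ⋆ S) := by
        rw [Aop_convolution integrable_unitBox hS hC, ← Aop_eq_unitBox_convolution]
    _ = latticeHelmholtz p q (Aop unitBox) ⋆ S :=
        (latticeHelmholtz_convolution (integrable_Aop integrable_unitBox) hS hC).symm
    _ = v ⋆ Mop c S := by rw [← hMv, Mop_convolution c hv hS hC]

lemma eq_mul_Aop_Aop_sub_of_Mop_eq (hc : c ≠ 0) (hS : LocallyIntegrable S)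
    (hg : LocallyIntegrable g) (heq : ∀ x, Mop c S x = Aop (Aop g) x + μ) :
    S = fun x => (c ^ 2)⁻¹ * (Aop (Aop (S - g)) x - μ) := by
  ext x
  rw [Aop_Aop_sub hS hg, Pi.sub_apply, eq_inv_mul_iff_mul_eq₀ (pow_ne_zero 2 hc)]
  have hx := heq x
  rw [Mop] at hx
  linarith

lemma hasDerivAt_of_Mop_eq (hc : c ≠ 0) (hS : LocallyIntegrable S) (hg : LocallyIntegrable g)
    (heq : ∀ x, Mop c S x = Aop (Aop g) x + μ) (x : ℝ) :
    HasDerivAt S ((c ^ 2)⁻¹ * (Aop (S - g) (x + 1 / 2) - Aop (S - g) (x - 1 / 2))) x := by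
  have hA := continuous_Aop (hS.sub hg)
  have h := ((hasDerivAt_Aop hA x).sub_const μ).const_mul (c ^ 2)⁻¹
  rwa [← eq_mul_Aop_Aop_sub_of_Mop_eq hc hS hg heq] at h

lemma latticeHelmholtz_eq_of_Mop_eq (hc : c ≠ 0) (hS : Continuous S) (hC : ∀ x, |S x| ≤ C)
    (hg : Integrable g) (heq : ∀ x, Mop c S x = Aop (Aop g) x + μ) (hv : Integrable v)
    (hMv : Mop c v = latticeHelmholtz (kc ^ 2) (c ^ 2)⁻¹ (Aop unitBox)) (x : ℝ) :
    latticeHelmholtz (kc ^ 2) (c ^ 2)⁻¹ S x =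
      (c ^ 2)⁻¹ * ((v ⋆ Aop (Aop g)) x - latticeHelmholtz (kc ^ 2) (c ^ 2)⁻¹ (Aop (Aop g)) x)
        + (c ^ 2)⁻¹ * μ * ((∫ y, v y) - kc ^ 2) := by
  have hvM : v ⋆ Mop c S = v ⋆ Aop (Aop g) + fun _ => μ * ∫ y, v y := by
    have hAAg := continuous_Aop (continuous_Aop hg.locallyIntegrable).locallyIntegrable
    have hconst : v ⋆ (fun _ : ℝ => μ) = fun _ => μ * ∫ y, v y := by
      ext y
      simp only [convolution_lsmul, smul_eq_mul, integral_mul_const, mul_comm μ]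
    rw [← hconst, funext heq]
    exact ConvolutionExists.distrib_add
      (convolutionExists_of_bounded hv hAAg.aestronglyMeasurable
        (abs_Aop_le_integral_abs (integrable_Aop hg)))
      (convolutionExists_of_bounded hv aestronglyMeasurable_const fun _ => le_rfl)
  have hAAS := congrFun ((latticeHelmholtz_Aop_Aop hS hC hv hMv).trans hvM) x
  have hAS (y : ℝ) : Aop (Aop S) y = c ^ 2 * S y + Aop (Aop g) y + μ := by
    have hy := heq y
    rw [Mop] at hy
    linarith
  simp only [Pi.add_apply, latticeHelmholtz, hAS] at hAAS ⊢
  rw [← sub_eq_iff_eq_add.2 hAAS]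
  field_simp
  ring

lemma hasDerivAt_deriv_of_Mop_eq (hc : c ≠ 0) (hS : Continuous S) (hC : ∀ x, |S x| ≤ C)
    (hg : Continuous g) (hgi : Integrable g) (heq : ∀ x, Mop c S x = Aop (Aop g) x + μ)
    (hv : Integrable v) (hMv : Mop c v = latticeHelmholtz (kc ^ 2) (c ^ 2)⁻¹ (Aop unitBox))
    (x : ℝ) :
    HasDerivAt (deriv S) (oscillatorForcing c kc v g x
      + (c ^ 2)⁻¹ * μ * ((∫ y, v y) - kc ^ 2) - kc ^ 2 * S x) x := by
  have hderiv (y : ℝ) :=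
    (hasDerivAt_of_Mop_eq hc hS.locallyIntegrable hgi.locallyIntegrable heq y).deriv
  rw [funext hderiv]
  convert! hasDerivAt_mul_sub_Aop (hS.sub hg) (c ^ 2)⁻¹ x using 1
  have hLS := latticeHelmholtz_eq_of_Mop_eq hc hS hC hgi heq hv hMv x
  simp only [oscillatorForcing, latticeHelmholtz, Pi.sub_apply, Pi.smul_apply, smul_eq_mul] at hLS ⊢
  linear_combination -hLS

end LinearEquation

section Oscillator

lemma exists_tendsto_norm_sub_le_of_integrable_deriv {E : Type*} [NormedAddCommGroup E]
    [NormedSpace ℝ E] [CompleteSpace E] {Z Z' : ℝ → E} (hZ : ∀ x, HasDerivAt Z (Z' x) x)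
    (hZ' : Integrable Z') :
    ∃ ζ, Tendsto Z atTop (𝓝 ζ) ∧ ∀ x, ‖ζ - Z x‖ ≤ ∫ y, ‖Z' y‖ := by
  have hlim : Tendsto Z atTop (𝓝 (limUnder atTop Z)) :=
    tendsto_limUnder_of_hasDerivAt_of_integrableOn_Ioi (a := 0) (fun x _ => hZ x) hZ'.integrableOn
  refine ⟨_, hlim, fun x => ?_⟩
  rw [← integral_Ioi_of_hasDerivAt_of_tendsto' (fun y _ => hZ y) hZ'.integrableOn hlim]
  exact (norm_integral_le_integral_norm _).trans
    (setIntegral_le_integral hZ'.norm (ae_of_all _ fun y => norm_nonneg _))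

variable {k : ℝ} {T T' f : ℝ → ℝ}

/-- The amplitude `e^{-ikx} (T' + i k T)`, constant along the free oscillations
`T'' + k² T = 0`. -/
noncomputable def oscillatorAmplitude (k : ℝ) (T T' : ℝ → ℝ) (x : ℝ) : ℂ :=
  Complex.exp ((-(k * x) : ℝ) * Complex.I) * (T' x + (k * T x : ℝ) * Complex.I)

lemma abs_le_norm_oscillatorAmplitude (x : ℝ) : |T' x| ≤ ‖oscillatorAmplitude k T T' x‖ := by
  rw [oscillatorAmplitude, norm_mul, Complex.norm_exp_ofReal_mul_I, one_mul]
  simpa using Complex.abs_re_le_norm (T' x + (k * T x : ℝ) * Complex.I)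

lemma hasDerivAt_oscillatorAmplitude {x : ℝ} (hT : HasDerivAt T (T' x) x)
    (hT' : HasDerivAt T' (f x - k ^ 2 * T x) x) :
    HasDerivAt (oscillatorAmplitude k T T')
      (Complex.exp ((-(k * x) : ℝ) * Complex.I) * f x) x := by
  have hexp := (((hasDerivAt_id x).const_mul k).neg.ofReal_comp.mul_const Complex.I).cexp
  convert! hexp.mul (hT'.ofReal_comp.add
    ((hT.const_mul k).ofReal_comp.mul_const Complex.I)) using 1
  simp only [Pi.neg_apply, Pi.add_apply, id_eq]
  push_cast
  linear_combination (Complex.exp (-(k * x) * Complex.I) * k ^ 2 * T x) * Complex.I_sq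

lemma im_exp_mul_oscillatorAmplitude_sub (ζ : ℂ) (x : ℝ) :
    (Complex.exp ((k * x : ℝ) * Complex.I) * (oscillatorAmplitude k T T' x - ζ)).im =
      k * T x - ζ.im * cos (k * x) - ζ.re * sin (k * x) := by
  rw [oscillatorAmplitude, Complex.ofReal_neg, neg_mul, Complex.exp_neg, mul_sub,
    mul_inv_cancel_left₀ (Complex.exp_ne_zero _), Complex.sub_im, Complex.mul_im _ ζ,
    Complex.exp_ofReal_mul_I_re, Complex.exp_ofReal_mul_I_im, Complex.add_im, Complex.ofReal_im,
    Complex.im_ofReal_mul, Complex.I_im]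
  ring

lemma exists_tendsto_sub_cos_sub_sin (hk : k ≠ 0) (hf : Integrable f)
    (hT : ∀ x, HasDerivAt T (T' x) x) (hT' : ∀ x, HasDerivAt T' (f x - k ^ 2 * T x) x) :
    ∃ α β : ℝ, Tendsto (fun x => T x - α * cos (k * x) - β * sin (k * x)) atTop (𝓝 0) ∧
      (α = 0 → β = 0 → ∀ x, |T' x| ≤ ∫ y, |f y|) := by
  have hZ'_int : Integrable fun x : ℝ => Complex.exp ((-(k * x) : ℝ) * Complex.I) * f x :=
    hf.ofReal.bdd_mul (c := 1) (by fun_prop)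
      (ae_of_all _ fun x => (Complex.norm_exp_ofReal_mul_I _).le)
  obtain ⟨ζ, hζ, hζ_le⟩ := exists_tendsto_norm_sub_le_of_integrable_deriv
    (fun x => hasDerivAt_oscillatorAmplitude (hT x) (hT' x)) hZ'_int
  refine ⟨ζ.im / k, ζ.re / k, ?_, fun him hre x => ?_⟩
  · have hdecay : Tendsto (fun x : ℝ => Complex.exp ((k * x : ℝ) * Complex.I) *
        (oscillatorAmplitude k T T' x - ζ)) atTop (𝓝 0) := by
      rw [tendsto_zero_iff_norm_tendsto_zero]
      simpa only [norm_mul, Complex.norm_exp_ofReal_mul_I, one_mul] using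
        tendsto_iff_norm_sub_tendsto_zero.1 hζ
    have him := ((Complex.continuous_im.tendsto 0).comp hdecay).div_const k
    rw [Complex.zero_im, zero_div] at him
    refine him.congr fun x => ?_
    rw [Function.comp_apply, im_exp_mul_oscillatorAmplitude_sub]
    field_simp
  · have hζ₀ : ζ = 0 := Complex.ext ((div_eq_zero_iff.1 hre).resolve_right hk)
      ((div_eq_zero_iff.1 him).resolve_right hk)
    have hZ_le := hζ_le x
    simp only [hζ₀, zero_sub, norm_neg, norm_mul, Complex.norm_exp_ofReal_mul_I, one_mul,
      Complex.norm_real, Real.norm_eq_abs] at hZ_le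
    exact (abs_le_norm_oscillatorAmplitude x).trans hZ_le

end Oscillator

section Dichotomy

lemma eq_zero_of_abs_deriv_le_integral {S g : ℝ → ℝ} {Λ K ε : ℝ} (hΛ : 0 ≤ Λ) (hK : 0 ≤ K)
    (hε : 0 ≤ ε) (hS : Differentiable ℝ S) (hS₀ : S 0 = 0)
    (hS' : ∀ x, |deriv S x| ≤ Λ * ∫ y, |g y|) (hg : ∀ x, |g x| ≤ K * |S x|)
    (hg₀ : ∀ x ∉ Set.Icc (-ε) ε, g x = 0) (hsmall : 2 * Λ * K * ε ^ 2 < 1) : S = 0 := by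
  set G := ∫ y, |g y|
  have hS_le (x : ℝ) : |S x| ≤ Λ * G * |x| := by
    simpa [hS₀] using convex_univ.norm_image_sub_le_of_norm_deriv_le (fun y _ => hS y)
      (fun y _ => hS' y) (Set.mem_univ 0) (Set.mem_univ x)
  have hG_nonneg : 0 ≤ G := integral_nonneg fun y => abs_nonneg _
  have hG_le : G ≤ 2 * Λ * K * ε ^ 2 * G := by
    have hg_le (x : ℝ) (hx : x ∈ Set.Icc (-ε) ε) : ‖|g x|‖ ≤ K * (Λ * G * ε) := by
      rw [norm_abs_eq_norm, Real.norm_eq_abs]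
      exact (hg x).trans (by gcongr; exact (hS_le x).trans (by gcongr; exact abs_le.2 hx))
    have hG_supp : ∫ x in Set.Icc (-ε) ε, |g x| = G :=
      setIntegral_eq_integral_of_forall_compl_eq_zero fun x hx => by rw [hg₀ x hx, abs_zero]
    calc G ≤ K * (Λ * G * ε) * (ε - -ε) := by
          have h := norm_setIntegral_le_of_norm_le_const (μ := volume) (by simp) hg_le
          rwa [hG_supp, Real.norm_of_nonneg hG_nonneg,
            Real.volume_real_Icc_of_le (neg_le_self hε)] at h
      _ = 2 * Λ * K * ε ^ 2 * G := by ring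
  have hG₀ : G = 0 := by nlinarith
  ext x
  simpa [hG₀] using hS_le x

variable {c kc : ℝ}

lemma exists_tendsto_and_abs_deriv_le_of_Mop_eq (hc : c ≠ 0) (hroot : msymb c kc = 0)
    (hsimple : deriv (msymb c) kc ≠ 0) (hroots : ∀ k, k ≠ kc → k ≠ -kc → msymb c k ≠ 0) :
    ∃ Λ, 0 ≤ Λ ∧ ∀ (S g : ℝ → ℝ) (μ C : ℝ), Continuous S → (∀ x, |S x| ≤ C) → Continuous g →
      Integrable g → (∀ x, Mop c S x = Aop (Aop g) x + μ) →
      ∃ α β γ, Tendsto (fun x => S x - α * cos (kc * x) - β * sin (kc * x) - γ) atTop (𝓝 0) ∧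
        (α = 0 → β = 0 → ∀ x, |deriv S x| ≤ Λ * ∫ y, |g y|) := by
  have hkc : kc ≠ 0 := by
    rintro rfl
    exact hsimple (self_eq_neg.1 (by simpa using deriv_msymb_neg c 0))
  obtain ⟨v, hv, hMv⟩ := exists_Mop_eq_latticeHelmholtz_tent hc hroot hsimple hroots
  have : 0 ≤ ∫ x, |v x| := integral_nonneg fun x => abs_nonneg _
  refine ⟨(c ^ 2)⁻¹ * ((∫ x, |v x|) + (kc ^ 2 + 4 * (c ^ 2)⁻¹)) + 4 * (c ^ 2)⁻¹, by positivity,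
    fun S g μ C hS hC hg hgi heq => ?_⟩
  set b := (c ^ 2)⁻¹ * μ * ((∫ y, v y) - kc ^ 2) with hb
  have hdiff (x : ℝ) : HasDerivAt (fun x => S x - b / kc ^ 2) (deriv S x) x :=
    (hasDerivAt_of_Mop_eq hc hS.locallyIntegrable hg.locallyIntegrable
      heq x).differentiableAt.hasDerivAt.sub_const _
  obtain ⟨α, β, hlim, hder⟩ := exists_tendsto_sub_cos_sub_sin hkc
    (integrable_oscillatorForcing (c := c) (kc := kc) hv hgi) hdiff fun x => by
      convert! hasDerivAt_deriv_of_Mop_eq hc hS hC hg hgi heq hv hMv x using 1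
      rw [← hb]
      field_simp
      ring
  refine ⟨α, β, b / kc ^ 2, hlim.congr fun x => by ring, fun hα hβ x => ?_⟩
  exact (hder hα hβ x).trans (integral_abs_oscillatorForcing_le hv hgi)

end Dichotomy

section CrossingWaves

/-- A phase transition wave that crosses the spinodal region `[-δ, δ]` inside `[-ε, ε]`: a
continuous solution of `M R = A² (ψ ∘ R) + const` with `R 0 = 0` and `|R| ≥ δ` outside `(-ε, ε)`,
where `ψ` is the derivative of the potential `Ψ_δ`. -/
structure IsCrossingWave (c : ℝ) (ψ : ℝ → ℝ) (δ ε : ℝ) (R : ℝ → ℝ) : Prop where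
  continuous : Continuous R
  exists_Mop_eq : ∃ μ, ∀ x, Mop c R x = Aop (Aop fun y => ψ (R y)) x + μ
  map_zero : R 0 = 0
  le_neg : ∀ x ≤ -ε, R x ≤ -δ
  le : ∀ x, ε ≤ x → δ ≤ R x

/-- The properties of `ψ = Ψ_δ'` on which the comparison of waves relies: `K`-Lipschitz continuity
and constancy on each side of the spinodal region `[-δ, δ]`. -/
structure IsSaturatedLipschitz (K δ : ℝ) (ψ : ℝ → ℝ) : Prop where
  abs_sub_le : ∀ r s, |ψ r - ψ s| ≤ K * |r - s|
  eq_left : ∀ r ≤ -δ, ψ r = ψ (-δ)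
  eq_right : ∀ r, δ ≤ r → ψ r = ψ δ

variable {c kc K δ ε : ℝ} {ψ R₁ R₂ : ℝ → ℝ}

namespace IsSaturatedLipschitz

lemma nonneg (hψ : IsSaturatedLipschitz K δ ψ) : 0 ≤ K := by
  simpa using (abs_nonneg _).trans (hψ.abs_sub_le 1 0)

lemma continuous (hψ : IsSaturatedLipschitz K δ ψ) : Continuous ψ :=
  (LipschitzWith.of_dist_le' hψ.abs_sub_le).continuous

end IsSaturatedLipschitz

lemma AssumptionA.isSaturatedLipschitz_deriv {Ψ : ℝ → ℝ → ℝ} {CΨ : ℝ} (hA : AssumptionA Ψ CΨ)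
    (hδ : 0 < δ) : IsSaturatedLipschitz (CΨ / δ) δ (deriv (Ψ δ)) := by
  obtain ⟨-, hC2, hsign, -, hderiv⟩ := hA.2 δ hδ
  have hdiff : Differentiable ℝ (deriv (Ψ δ)) := hC2.differentiable_deriv_two
  refine ⟨fun r s => convex_univ.norm_image_sub_le_of_norm_deriv_le (fun x _ => hdiff x)
    (fun x _ => hderiv x) (Set.mem_univ s) (Set.mem_univ r), fun r hr => ?_, fun r hr => ?_⟩
  · have hr₀ : r < 0 := hr.trans_lt (neg_lt_zero.2 hδ)
    rw [hsign r (by rw [abs_of_neg hr₀]; linarith), hsign (-δ) (by rw [abs_neg, abs_of_pos hδ]),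
      Real.sign_of_neg hr₀, Real.sign_of_neg (neg_lt_zero.2 hδ)]
  · have hr₀ : 0 < r := hδ.trans_le hr
    rw [hsign r (by rwa [abs_of_pos hr₀]), hsign δ (by rw [abs_of_pos hδ]),
      Real.sign_of_pos hr₀, Real.sign_of_pos hδ]

lemma IsW2inf.exists_abs_sub_le (h₁ : IsW2inf R₁) (h₂ : IsW2inf R₂) :
    ∃ C, ∀ x, |R₁ x - R₂ x| ≤ C := by
  obtain ⟨C₁, hC₁⟩ := h₁.2.1
  obtain ⟨C₂, hC₂⟩ := h₂.2.1
  exact ⟨C₁ + C₂, fun x => (abs_sub _ _).trans (add_le_add (hC₁ x).1 (hC₂ x).1)⟩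

namespace IsCrossingWave

lemma comp_sub_comp_eq_zero (hψ : IsSaturatedLipschitz K δ ψ) (h₁ : IsCrossingWave c ψ δ ε R₁)
    (h₂ : IsCrossingWave c ψ δ ε R₂) {x : ℝ} (hx : x ∉ Set.Icc (-ε) ε) :
    (ψ ∘ R₁ - ψ ∘ R₂) x = 0 := by
  rw [Pi.sub_apply, sub_eq_zero, Function.comp_apply, Function.comp_apply]
  rw [Set.mem_Icc, not_and_or, not_le, not_le] at hx
  rcases hx with hx | hx
  · rw [hψ.eq_left _ (h₁.le_neg x hx.le), hψ.eq_left _ (h₂.le_neg x hx.le)]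
  · rw [hψ.eq_right _ (h₁.le x hx.le), hψ.eq_right _ (h₂.le x hx.le)]

lemma exists_Mop_sub_eq (hψ : Continuous ψ) (h₁ : IsCrossingWave c ψ δ ε R₁)
    (h₂ : IsCrossingWave c ψ δ ε R₂) :
    ∃ μ, ∀ x, Mop c (R₁ - R₂) x = Aop (Aop (ψ ∘ R₁ - ψ ∘ R₂)) x + μ := by
  obtain ⟨μ₁, hμ₁⟩ := h₁.exists_Mop_eq
  obtain ⟨μ₂, hμ₂⟩ := h₂.exists_Mop_eq
  refine ⟨μ₁ - μ₂, fun x => ?_⟩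
  rw [Mop_sub c h₁.continuous.locallyIntegrable h₂.continuous.locallyIntegrable,
    Aop_Aop_sub (hψ.comp h₁.continuous).locallyIntegrable
      (hψ.comp h₂.continuous).locallyIntegrable, Pi.sub_apply, Pi.sub_apply, hμ₁, hμ₂]
  exact add_sub_add_comm _ _ _ _

end IsCrossingWave

lemma exists_forall_isCrossingWave_eq_or_tendsto_sub (hc : c ≠ 0) (hroot : msymb c kc = 0)
    (hsimple : deriv (msymb c) kc ≠ 0) (hroots : ∀ k, k ≠ kc → k ≠ -kc → msymb c k ≠ 0) :
    ∃ Λ, ∀ {ψ R₁ R₂ : ℝ → ℝ} {K δ ε C : ℝ}, IsSaturatedLipschitz K δ ψ → 0 ≤ ε →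
      2 * Λ * K * ε ^ 2 < 1 → IsCrossingWave c ψ δ ε R₁ → IsCrossingWave c ψ δ ε R₂ →
      (∀ x, |R₁ x - R₂ x| ≤ C) →
      R₁ = R₂ ∨ ∃ γ α β : ℝ, ¬(α = 0 ∧ β = 0) ∧
        Tendsto (fun x => R₁ x - R₂ x - α * (cos (kc * x) - 1) - β * sin (kc * x) - γ)
          atTop (𝓝 0) := by
  obtain ⟨Λ, hΛ, hasymp⟩ := exists_tendsto_and_abs_deriv_le_of_Mop_eq hc hroot hsimple hroots
  refine ⟨Λ, fun {ψ R₁ R₂ K δ ε C} hψ hε hsmall h₁ h₂ hC => ?_⟩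
  have hS : Continuous (R₁ - R₂) := h₁.continuous.sub h₂.continuous
  have hg : Continuous (ψ ∘ R₁ - ψ ∘ R₂) :=
    (hψ.continuous.comp h₁.continuous).sub (hψ.continuous.comp h₂.continuous)
  have hg₀ (x : ℝ) := IsCrossingWave.comp_sub_comp_eq_zero hψ h₁ h₂ (x := x)
  have hgi : Integrable (ψ ∘ R₁ - ψ ∘ R₂) :=
    hg.integrable_of_hasCompactSupport (.intro isCompact_Icc hg₀)
  obtain ⟨μ, hμ⟩ := IsCrossingWave.exists_Mop_sub_eq hψ.continuous h₁ h₂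
  obtain ⟨α, β, γ, hlim, hder⟩ := hasymp _ _ μ C hS hC hg hgi hμ
  by_cases hαβ : α = 0 ∧ β = 0
  · refine .inl (sub_eq_zero.1 (eq_zero_of_abs_deriv_le_integral hΛ hψ.nonneg hε ?_ ?_
      (hder hαβ.1 hαβ.2) (fun x => hψ.abs_sub_le _ _) hg₀ hsmall))
    · exact fun x => (hasDerivAt_of_Mop_eq hc hS.locallyIntegrable hg.locallyIntegrable
        hμ x).differentiableAt
    · rw [Pi.sub_apply, h₁.map_zero, h₂.map_zero, sub_self]
  · exact .inr ⟨γ + α, α, β, hαβ, hlim.congr fun x => by rw [Pi.sub_apply]; ring⟩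

lemma tendsto_rpow_sq_div_nhdsGT_zero {κ : ℝ} (hκ : 1 / 2 < κ) :
    Tendsto (fun δ : ℝ => (δ ^ κ) ^ 2 / δ) (𝓝[>] 0) (𝓝 0) := by
  have h : Tendsto (fun δ : ℝ => δ ^ (κ * 2 - 1)) (𝓝[>] 0) (𝓝 0) := by
    have h := (continuousAt_rpow_const 0 (κ * 2 - 1) (Or.inr (by linarith))).tendsto
    rw [zero_rpow (by linarith)] at h
    exact h.mono_left nhdsWithin_le_nhds
  refine h.congr' (eventually_mem_nhdsWithin.mono fun δ hδ => ?_)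
  rw [rpow_sub_one (ne_of_gt hδ), rpow_mul (le_of_lt hδ), rpow_two]

theorem stmt15_general {L κ : ℝ} (hc : c ≠ 0) (hroot : msymb c kc = 0)
    (hsimple : deriv (msymb c) kc ≠ 0) (hroots : ∀ k, k ≠ kc → k ≠ -kc → msymb c k ≠ 0)
    (hκ : 1 / 2 < κ) :
    ∃ δκ > 0, ∀ δ, 0 < δ → δ < δκ → ∀ ψ R₁ R₂ : ℝ → ℝ, IsSaturatedLipschitz (L / δ) δ ψ →
      IsCrossingWave c ψ δ (δ ^ κ) R₁ → IsCrossingWave c ψ δ (δ ^ κ) R₂ →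
      (∃ C, ∀ x, |R₁ x - R₂ x| ≤ C) →
      R₁ = R₂ ∨ ∃ γ α β : ℝ, ¬(α = 0 ∧ β = 0) ∧
        Tendsto (fun x => R₁ x - R₂ x - α * (cos (kc * x) - 1) - β * sin (kc * x) - γ)
          atTop (𝓝 0) := by
  obtain ⟨Λ, hdich⟩ := exists_forall_isCrossingWave_eq_or_tendsto_sub hc hroot hsimple hroots
  have hsmall := (tendsto_rpow_sq_div_nhdsGT_zero hκ).const_mul (2 * Λ * L)
  rw [mul_zero] at hsmall
  obtain ⟨δκ, hδκ, hδκ_lt⟩ :=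
    mem_nhdsGT_iff_exists_Ioo_subset.1 (hsmall.eventually_lt_const zero_lt_one)
  refine ⟨δκ, hδκ, fun δ hδ hlt ψ R₁ R₂ hψ h₁ h₂ ⟨C, hC⟩ =>
    hdich hψ (rpow_nonneg hδ.le κ) ?_ h₁ h₂ hC⟩
  calc 2 * Λ * (L / δ) * (δ ^ κ) ^ 2 = 2 * Λ * L * ((δ ^ κ) ^ 2 / δ) := by ring
    _ < 1 := hδκ_lt ⟨hδ, hlt⟩

end CrossingWaves

/-- two phase transition waves that cross the spinodal region inside
`[-δ^κ, δ^κ]` either coincide or differ at `x → +∞` by a nontrivial harmonic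
oscillation with wave number `k_c` plus a constant. -/
theorem stmt15 (c kc : ℝ) (hc0 : 0 < c) (hc1 : c < 1) (hkc : 0 < kc)
    (ha : symb kc = c) (hm' : deriv (msymb c) kc ≠ 0)
    (hroots : ∀ k : ℝ, k ≠ kc → k ≠ -kc → msymb c k ≠ 0)
    (Ψ : ℝ → ℝ → ℝ) (CΨ : ℝ) (hA : AssumptionA Ψ CΨ)
    (hI : ∀ δ : ℝ, 0 < δ → Idelta Ψ δ = 0)
    (κ : ℝ) (hκ : 1 / 2 < κ) :
    ∃ δκ : ℝ, 0 < δκ ∧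
      ∀ δ : ℝ, 0 < δ → δ < δκ →
        ∀ (R₁ R₂ : ℝ → ℝ) (μ₁ μ₂ : ℝ),
          IsW2inf R₁ → IsW2inf R₂ →
          (∀ x, Mop c R₁ x = Aop (Aop (fun y => deriv (Ψ δ) (R₁ y))) x + μ₁) →
          (∀ x, Mop c R₂ x = Aop (Aop (fun y => deriv (Ψ δ) (R₂ y))) x + μ₂) →
          R₁ 0 = 0 → R₂ 0 = 0 →
          (∀ x : ℝ, x ≤ -(δ ^ κ) → R₁ x ≤ -δ) → (∀ x : ℝ, δ ^ κ ≤ x → δ ≤ R₁ x) →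
          (∀ x : ℝ, x ≤ -(δ ^ κ) → R₂ x ≤ -δ) → (∀ x : ℝ, δ ^ κ ≤ x → δ ≤ R₂ x) →
          ((∀ x, R₁ x = R₂ x) ∨
            ∃ γp αp βp : ℝ, ¬(αp = 0 ∧ βp = 0) ∧
              Tendsto (fun x => R₁ x - R₂ x - αp * (Real.cos (kc * x) - 1)
                - βp * Real.sin (kc * x) - γp) atTop (nhds 0)) := by
  obtain ⟨δκ, hδκ, hdich⟩ := stmt15_general (L := CΨ) hc0.ne'
    (by rw [msymb, ha, sub_self]) hm' hroots hκ
  refine ⟨δκ, hδκ, fun δ hδ hlt R₁ R₂ μ₁ μ₂ hR₁ hR₂ heq₁ heq₂ h0₁ h0₂ hn₁ hp₁ hn₂ hp₂ => ?_⟩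
  exact (hdich δ hδ hlt _ R₁ R₂ (hA.isSaturatedLipschitz_deriv hδ)
    ⟨hR₁.1.continuous, ⟨μ₁, heq₁⟩, h0₁, hn₁, hp₁⟩ ⟨hR₂.1.continuous, ⟨μ₂, heq₂⟩, h0₂, hn₂, hp₂⟩
    (hR₁.exists_abs_sub_le hR₂)).imp congrFun id
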